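/- Let v ∈ Λ7♯ be any vector with ‖v‖² = 3 whose coset v + Λ7 has minimal norm 3 (the minimum of ‖x‖² over the coset is 3), and set O7 = ⟨Λ7, v⟩. Then every integral lattice L in ℝ^7 with Λ7 ⊆ L is isometric (via a linear isometry of ℝ^7) to one of the eleven lattices: Λ7; O7; ⟨Λ7, ε1⟩; ⟨Λ7, ε2+ε4⟩; ⟨O7, ε1⟩; ⟨Λ7, ε1, ε2⟩; ⟨Λ7, ε1+ε3, ε2+ε4⟩; ⟨Λ7, ε1, ε2, ε4⟩; ⟨Λ7, ε1, ε2, ε1+ε3⟩; D7 = {x ∈ ℤ^7 : x1+⋯+x7 even}; and ℤ^7. -/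

import Mathlib

noncomputable section

open scoped RealInnerProductSpace

/-- `ℝ^n` with the standard inner product. -/
abbrev E (n : ℕ) := EuclideanSpace ℝ (Fin n)

/-- The standard basis vector `ε i`. -/
def εv {n : ℕ} (i : Fin n) : E n := EuclideanSpace.single i 1

/-- The vector of `ℝ^n` with the given coordinates. -/
def vec {n : ℕ} (x : Fin n → ℝ) : E n := (WithLp.equiv 2 (Fin n → ℝ)).symm x

/-- The vector of `ℝ^n` with the given integer coordinates. -/
def intVec {n : ℕ} (x : Fin n → ℤ) : E n := (WithLp.equiv 2 (Fin n → ℝ)).symm fun i => (x i : ℝ)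

/-- A lattice is integral if all pairwise inner products of its elements are integers. -/
def LatticeIsIntegral {n : ℕ} (L : Submodule ℤ (E n)) : Prop :=
  ∀ x ∈ L, ∀ y ∈ L, ∃ k : ℤ, ⟪x, y⟫ = (k : ℝ)

/-- Two lattices are isometric if a linear isometry of the ambient space carries
one onto the other. -/
def IsometricLattices {n : ℕ} (L M : Submodule ℤ (E n)) : Prop :=
  ∃ g : E n ≃ₗᵢ[ℝ] E n, g '' (L : Set (E n)) = (M : Set (E n))

/-- The dual lattice `Λ♯ = {x : ⟪x,y⟫ ∈ ℤ for all y ∈ Λ}`. -/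
def dualLattice {n : ℕ} (Λ : Submodule ℤ (E n)) : Submodule ℤ (E n) where
  carrier := {x | ∀ y ∈ Λ, ∃ k : ℤ, ⟪x, y⟫ = (k : ℝ)}
  zero_mem' := fun y _ => ⟨0, by simp⟩
  add_mem' := by
    intro a b ha hb y hy
    obtain ⟨k, hk⟩ := ha y hy
    obtain ⟨l, hl⟩ := hb y hy
    exact ⟨k + l, by rw [inner_add_left, hk, hl]; push_cast; ring⟩
  smul_mem' := by
    intro c x hx y hy
    obtain ⟨k, hk⟩ := hx y hy
    refine ⟨c * k, ?_⟩
    rw [← Int.cast_smul_eq_zsmul ℝ c x, real_inner_smul_left, hk]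
    push_cast
    ring

/-- The quotient abelian group `Λ♯/Λ`. -/
abbrev DualQuot {n : ℕ} (Λ : Submodule ℤ (E n)) :=
  (dualLattice Λ) ⧸ (Λ.comap (dualLattice Λ).subtype)

/-- The coset `c ∈ Λ♯/Λ` has minimal norm `m`, i.e. `m` is the minimum of `‖x‖²`
over `x` in the coset `c`. -/
def CosetMinNorm {n : ℕ} (Λ : Submodule ℤ (E n)) (c : DualQuot Λ) (m : ℝ) : Prop :=
  IsLeast {r : ℝ | ∃ x : dualLattice Λ, Submodule.Quotient.mk x = c ∧ r = ‖(x : E n)‖ ^ 2} m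

/-- The binary code `C ⊆ 𝔽₂⁷` spanned by `(1,0,1,1,1,0,0)`, `(0,1,0,1,1,1,0)`,
`(0,0,1,0,1,1,1)`. -/
def code7 : Submodule (ZMod 2) (Fin 7 → ZMod 2) :=
  Submodule.span (ZMod 2)
    {![1, 0, 1, 1, 1, 0, 0], ![0, 1, 0, 1, 1, 1, 0], ![0, 0, 1, 0, 1, 1, 1]}

/-- The laminated lattice `Λ₇ = {x ∈ ℤ⁷ : x mod 2 ∈ C} ≅ √2·E₇`. -/
def Λ7 : Submodule ℤ (E 7) :=
  Submodule.span ℤ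
    {v : E 7 | ∃ x : Fin 7 → ℤ, (fun i => (x i : ZMod 2)) ∈ code7 ∧ v = intVec x}

/-- `D₇ = {x ∈ ℤ⁷ : x1 + ⋯ + x7 even}`. -/
def latD7 : Submodule ℤ (E 7) :=
  Submodule.span ℤ {v : E 7 | ∃ x : Fin 7 → ℤ, Even (∑ i, x i) ∧ v = intVec x}

/-- `ℤ⁷`. -/
def latZ7 : Submodule ℤ (E 7) :=
  Submodule.span ℤ {v : E 7 | ∃ x : Fin 7 → ℤ, v = intVec x}

/-!
A lattice between `Λ7` and `ℤ⁷` is determined by the subspace of `𝔽₂³ × 𝔽₂` formed by the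
syndromes of its vectors with respect to `code7`. The coordinates of `ℤ⁷` correspond to the seven
nonzero vectors of `𝔽₂³`, so `GL₃(𝔽₂)` acts by coordinate permutations, and the eleven lattices
are its orbits on subspaces.

An integral `L ⊇ Λ7` need not lie in `ℤ⁷`. It satisfies `2L ⊆ Λ7`, so a vector `x ∈ L` outside
`ℤ⁷` is congruent modulo `ℤ⁷` to half of a norm-4 vector of `Λ7`. The reflection in this vector
preserves `Λ7`, maps `L ∩ ℤ⁷` into `ℤ⁷` and moves `x` into `ℤ⁷`. As `L` is finitely generated,
finitely many such steps move it into `ℤ⁷`.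

Applied to `⟨Λ7, v⟩`, these steps take `v` to an integer vector of syndrome `(0, 1)`, the only
syndrome without representatives of norm at most 2. Vectors of this syndrome have even inner
products with `Λ7`, hence so does `v`, and this puts `v` itself in `ℤ⁷`, with syndrome `(0, 1)`.
-/

section SubspacesOfProduct

open Submodule

variable {K V : Type*} [Field K] [AddCommGroup V] [Module K V]

theorem exists_eq_prod_bot_or_eq_prod_top_or_eq_sup_span (W : Submodule K (V × K)) :
    ∃ P : Submodule K V, W = P.prod ⊥ ∨ W = P.prod ⊤ ∨
      ∃ p ∉ P, W = P.prod ⊥ ⊔ span K {(p, 1)} := by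
  set P := W.comap (LinearMap.inl K V K)
  have hPW : P.prod ⊥ ≤ W := by
    rintro ⟨x, t⟩ ⟨hx, rfl⟩
    exact hx
  refine ⟨P, ?_⟩
  by_cases hW : ∀ c ∈ W, c.2 = 0
  · refine .inl (le_antisymm (fun c hc => ⟨?_, hW c hc⟩) hPW)
    change (c.1, (0 : K)) ∈ W
    rwa [← hW c hc]
  push Not at hW
  obtain ⟨c, hc, hc0⟩ := hW
  obtain ⟨p, hp⟩ : ∃ p : V, (p, (1 : K)) ∈ W :=
    ⟨c.2⁻¹ • c.1, by simpa [Prod.smul_def, hc0] using W.smul_mem c.2⁻¹ hc⟩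
  have hWp : W = P.prod ⊥ ⊔ span K {(p, 1)} := by
    refine le_antisymm (fun x hx => ?_) (sup_le hPW ((span_singleton_le_iff_mem _ _).2 hp))
    refine mem_sup.2 ⟨(x.1 - x.2 • p, 0), ⟨?_, rfl⟩, x.2 • (p, 1),
      smul_mem _ _ (mem_span_singleton_self _), by simp⟩
    change (x.1 - x.2 • p, (0 : K)) ∈ W
    simpa [Prod.sub_def] using W.sub_mem hx (W.smul_mem x.2 hp)
  by_cases hpP : p ∈ P
  · refine .inr (.inl (le_antisymm ?_ fun x hx => ?_))
    · rw [hWp]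
      exact sup_le (prod_mono le_rfl bot_le) ((span_singleton_le_iff_mem _ _).2 ⟨hpP, trivial⟩)
    · have hxp : (x.1 - x.2 • p, (0 : K)) ∈ W := P.sub_mem hx.1 (P.smul_mem x.2 hpP)
      simpa using W.add_mem hxp (W.smul_mem x.2 hp)
  · exact .inr (.inr ⟨p, hpP, hWp⟩)

variable [FiniteDimensional K V]

theorem exists_linearEquiv_apply_eq_of_linearIndependent {ι : Type*} {v w : ι → V}
    (hv : LinearIndependent K v) (hw : LinearIndependent K w) :
    ∃ A : V ≃ₗ[K] V, ∀ i, A (v i) = w i := by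
  obtain ⟨A, hA⟩ := exists_linearEquiv_restrict_eq
    (hv.linearCombinationEquiv.symm ≪≫ₗ hw.linearCombinationEquiv)
  refine ⟨A, fun i => ?_⟩
  have hvi := hA ⟨v i, subset_span ⟨i, rfl⟩⟩
  have hsymm : hv.linearCombinationEquiv.symm ⟨v i, subset_span ⟨i, rfl⟩⟩ = Finsupp.single i 1 :=
    (LinearEquiv.symm_apply_eq _).2 (Subtype.ext (by simp))
  simpa [hsymm] using hvi.symm

theorem exists_linearIndependent_span_range_eq (P : Submodule K V) :
    ∃ v : Fin (Module.finrank K P) → V, LinearIndependent K v ∧ span K (Set.range v) = P := by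
  let b := Module.finBasis K P
  refine ⟨P.subtype ∘ b, b.linearIndependent.map' P.subtype P.ker_subtype, ?_⟩
  rw [Set.range_comp, span_image, b.span_eq, Submodule.map_top, range_subtype]

theorem exists_linearEquiv_map_eq_span_range {P : Submodule K V} {d : ℕ}
    (hd : Module.finrank K P = d) {w : Fin d → V} (hw : LinearIndependent K w) :
    ∃ A : V ≃ₗ[K] V, P.map (A : V →ₗ[K] V) = span K (Set.range w) := by
  subst hd
  obtain ⟨v, hv, hvP⟩ := exists_linearIndependent_span_range_eq P
  obtain ⟨A, hA⟩ := exists_linearEquiv_apply_eq_of_linearIndependent hv hw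
  refine ⟨A, ?_⟩
  conv_lhs => rw [← hvP, map_span, ← Set.range_comp]
  exact congr_arg (fun u => span K (Set.range u)) (funext hA)

theorem exists_linearEquiv_map_eq_span_range_and_apply_eq {P : Submodule K V} {d : ℕ}
    (hd : Module.finrank K P = d) {p : V} (hp : p ∉ P) {q : V} {w : Fin d → V}
    (hw : LinearIndependent K (Fin.cons q w : Fin (d + 1) → V)) :
    ∃ A : V ≃ₗ[K] V, P.map (A : V →ₗ[K] V) = span K (Set.range w) ∧ A p = q := by
  subst hd
  obtain ⟨v, hv, hvP⟩ := exists_linearIndependent_span_range_eq P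
  obtain ⟨A, hA⟩ := exists_linearEquiv_apply_eq_of_linearIndependent
    (linearIndependent_finCons.2 ⟨hv, by rwa [hvP]⟩ :
      LinearIndependent K (Fin.cons p v : Fin (_ + 1) → V)) hw
  refine ⟨A, ?_, hA 0⟩
  conv_lhs => rw [← hvP, map_span, ← Set.range_comp]
  exact congr_arg (fun u => span K (Set.range u)) (funext fun i => hA i.succ)

end SubspacesOfProduct

section BinarySubspaces

open Submodule

/-- Orbit representatives of the subspaces of `𝔽₂³ × 𝔽₂` under `GL₃(𝔽₂)` acting on the first
factor. They are the syndromes of the eleven lattices of the classification, in the same order. -/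
def standardSubspace : Fin 11 → Submodule (ZMod 2) ((Fin 3 → ZMod 2) × ZMod 2) :=
  ![⊥,
    span _ {(0, 1)},
    span _ {(![1, 0, 0], 1)},
    span _ {(![1, 0, 0], 0)},
    span _ {(0, 1), (![1, 0, 0], 1)},
    span _ {(![1, 0, 0], 1), (![0, 1, 0], 1)},
    span _ {(![0, 0, 1], 0), (![1, 0, 0], 0)},
    span _ {(![1, 0, 0], 1), (![0, 1, 0], 1), (![1, 1, 0], 1)},
    span _ {(![1, 0, 0], 1), (![0, 1, 0], 1), (![0, 0, 1], 0)},
    (⊤ : Submodule _ _).prod ⊥,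
    ⊤]

variable (P : Submodule (ZMod 2) (Fin 3 → ZMod 2))

theorem exists_map_prod_bot_eq_standardSubspace :
    ∃ (A : (Fin 3 → ZMod 2) ≃ₗ[ZMod 2] (Fin 3 → ZMod 2)) (i : Fin 11),
      (P.map (A : _ →ₗ[ZMod 2] _)).prod ⊥ = standardSubspace i := by
  have hP : Module.finrank (ZMod 2) P ≤ 3 := by simpa using P.finrank_le
  interval_cases hd : Module.finrank (ZMod 2) P
  · obtain ⟨A, hA⟩ := exists_linearEquiv_map_eq_span_range hd (w := ![])
      linearIndependent_empty_type
    exact ⟨A, 0, by simp [hA, standardSubspace]⟩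
  · obtain ⟨A, hA⟩ := exists_linearEquiv_map_eq_span_range hd (w := ![![1, 0, 0]])
      (Fintype.linearIndependent_iff.2 (by decide))
    refine ⟨A, 3, ?_⟩
    ext c
    simp only [hA, standardSubspace, Matrix.cons_val, mem_prod, mem_span_range_iff_exists_fun,
      mem_span_singleton, mem_bot]
    decide +revert
  · obtain ⟨A, hA⟩ := exists_linearEquiv_map_eq_span_range hd (w := ![![1, 0, 0], ![0, 0, 1]])
      (Fintype.linearIndependent_iff.2 (by decide))
    refine ⟨A, 6, ?_⟩
    ext c
    simp only [hA, standardSubspace, Matrix.cons_val, mem_prod, mem_span_range_iff_exists_fun,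
      mem_span_pair, mem_bot]
    decide +revert
  · have hP : P = ⊤ := eq_top_of_finrank_eq (by simpa using hd)
    exact ⟨.refl _ _, 9, by simp [hP, standardSubspace]⟩

theorem exists_map_prod_top_eq_standardSubspace :
    ∃ (A : (Fin 3 → ZMod 2) ≃ₗ[ZMod 2] (Fin 3 → ZMod 2)) (i : Fin 11),
      (P.map (A : _ →ₗ[ZMod 2] _)).prod ⊤ = standardSubspace i := by
  have hP : Module.finrank (ZMod 2) P ≤ 3 := by simpa using P.finrank_le
  interval_cases hd : Module.finrank (ZMod 2) P
  · obtain ⟨A, hA⟩ := exists_linearEquiv_map_eq_span_range hd (w := ![])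
      linearIndependent_empty_type
    refine ⟨A, 1, ?_⟩
    ext c
    simp only [hA, standardSubspace, Matrix.cons_val, mem_prod, mem_span_range_iff_exists_fun,
      mem_span_singleton, mem_top]
    decide +revert
  · obtain ⟨A, hA⟩ := exists_linearEquiv_map_eq_span_range hd (w := ![![1, 0, 0]])
      (Fintype.linearIndependent_iff.2 (by decide))
    refine ⟨A, 4, ?_⟩
    ext c
    simp only [hA, standardSubspace, Matrix.cons_val, mem_prod, mem_span_range_iff_exists_fun,
      mem_span_pair, mem_top]
    decide +revert
  · obtain ⟨A, hA⟩ := exists_linearEquiv_map_eq_span_range hd (w := ![![1, 0, 0], ![0, 1, 0]])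
      (Fintype.linearIndependent_iff.2 (by decide))
    refine ⟨A, 7, ?_⟩
    ext c
    simp only [hA, standardSubspace, Matrix.cons_val, mem_prod, mem_span_range_iff_exists_fun,
      mem_span_triple, mem_top]
    decide +revert
  · have hP : P = ⊤ := eq_top_of_finrank_eq (by simpa using hd)
    exact ⟨.refl _ _, 10, by simp [hP, standardSubspace]⟩

variable {P} in
theorem exists_map_prod_bot_sup_span_eq_standardSubspace {p : Fin 3 → ZMod 2} (hp : p ∉ P) :
    ∃ (A : (Fin 3 → ZMod 2) ≃ₗ[ZMod 2] (Fin 3 → ZMod 2)) (i : Fin 11),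
      (P.map (A : _ →ₗ[ZMod 2] _)).prod ⊥ ⊔ span _ {(A p, 1)} = standardSubspace i := by
  have hP : Module.finrank (ZMod 2) P < 3 := by
    simpa using finrank_lt (ne_of_mem_of_not_mem' mem_top hp).symm
  interval_cases hd : Module.finrank (ZMod 2) P
  · obtain ⟨A, hA, hAp⟩ := exists_linearEquiv_map_eq_span_range_and_apply_eq hd hp
      (q := ![1, 0, 0]) (w := ![]) (Fintype.linearIndependent_iff.2 (by decide))
    exact ⟨A, 2, by simp [hA, hAp, standardSubspace]⟩
  · obtain ⟨A, hA, hAp⟩ := exists_linearEquiv_map_eq_span_range_and_apply_eq hd hp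
      (q := ![1, 0, 0]) (w := ![![1, 1, 0]]) (Fintype.linearIndependent_iff.2 (by decide))
    refine ⟨A, 5, ?_⟩
    ext c
    simp only [hA, hAp, standardSubspace, Matrix.cons_val, mem_sup, mem_prod,
      mem_span_range_iff_exists_fun, mem_span_pair, mem_span_singleton, mem_bot]
    decide +revert
  · obtain ⟨A, hA, hAp⟩ := exists_linearEquiv_map_eq_span_range_and_apply_eq hd hp
      (q := ![1, 0, 0]) (w := ![![1, 1, 0], ![0, 0, 1]])
      (Fintype.linearIndependent_iff.2 (by decide))
    refine ⟨A, 8, ?_⟩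
    ext c
    simp only [hA, hAp, standardSubspace, Matrix.cons_val, mem_sup, mem_prod,
      mem_span_range_iff_exists_fun, mem_span_triple, mem_span_singleton, mem_bot]
    decide +revert

theorem exists_map_prodCongr_eq_standardSubspace
    (W : Submodule (ZMod 2) ((Fin 3 → ZMod 2) × ZMod 2)) :
    ∃ (A : (Fin 3 → ZMod 2) ≃ₗ[ZMod 2] (Fin 3 → ZMod 2)) (i : Fin 11),
      W.map (A.prodCongr (.refl _ (ZMod 2))).toLinearMap = standardSubspace i := by
  obtain ⟨P, rfl | rfl | ⟨p, hp, rfl⟩⟩ := exists_eq_prod_bot_or_eq_prod_top_or_eq_sup_span W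
  · simpa [LinearMap.prodMap_map_prod] using exists_map_prod_bot_eq_standardSubspace P
  · simpa [LinearMap.prodMap_map_prod] using exists_map_prod_top_eq_standardSubspace P
  · simpa [LinearMap.prodMap_map_prod, Submodule.map_sup, map_span] using
      exists_map_prod_bot_sup_span_eq_standardSubspace hp

end BinarySubspaces

section SyndromeLattices

variable {n : ℕ}

/-- `intVec` as a homomorphism of abelian groups, so that submodules can be pushed forward. -/
def intVecHom (n : ℕ) : (Fin n → ℤ) →ₗ[ℤ] E n :=
  AddMonoidHom.toIntLinearMap
    { toFun := intVec
      map_zero' := by ext i; simp [intVec]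
      map_add' := fun a b => by ext i; simp [intVec] }

@[simp]
theorem intVecHom_apply (a : Fin n → ℤ) : intVecHom n a = intVec a := rfl

theorem intVec_injective : Function.Injective (intVec : (Fin n → ℤ) → E n) := fun a b h => by
  ext i
  simpa [intVec] using congr_arg (fun x : E n => x i) h

theorem span_setOf_intVec {N : Submodule ℤ (Fin n → ℤ)} {q : (Fin n → ℤ) → Prop}
    (hq : ∀ a, q a ↔ a ∈ N) :
    Submodule.span ℤ {x : E n | ∃ a, q a ∧ x = intVec a} = N.map (intVecHom n) := by
  rw [← Submodule.span_eq (N.map (intVecHom n))]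
  congr 1
  ext x
  simp [hq, eq_comm]

variable {M : Type*} [AddCommGroup M]

/-- The lattice of integer vectors `a` whose syndrome `∑ i, a i • p i` with respect to the points
`p` of an abelian group lies in the subgroup `W`. -/
def syndromeLattice (p : Fin n → M) (W : Submodule ℤ M) : Submodule ℤ (E n) :=
  (W.comap (Fintype.linearCombination ℤ p)).map (intVecHom n)

variable (p : Fin n → M)

theorem mem_syndromeLattice {W : Submodule ℤ M} {x : E n} :
    x ∈ syndromeLattice p W ↔ ∃ a, Fintype.linearCombination ℤ p a ∈ W ∧ intVec a = x :=
  Iff.rfl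

theorem intVec_mem_syndromeLattice {W : Submodule ℤ M} {a : Fin n → ℤ} :
    intVec a ∈ syndromeLattice p W ↔ Fintype.linearCombination ℤ p a ∈ W :=
  intVec_injective.mem_set_image

theorem syndromeLattice_sup_span (W : Submodule ℤ M) (S : Set (Fin n → ℤ)) :
    syndromeLattice p (W ⊔ Submodule.span ℤ (Fintype.linearCombination ℤ p '' S)) =
      syndromeLattice p W ⊔ Submodule.span ℤ (intVec '' S) := by
  set f := Fintype.linearCombination ℤ p
  have hsup : W ⊔ (Submodule.span ℤ S).map f = (W.comap f ⊔ Submodule.span ℤ S).map f ⊔ W := by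
    rw [Submodule.map_sup, sup_right_comm, sup_eq_right.2 (Submodule.map_comap_le f W)]
  rw [syndromeLattice, ← Submodule.map_span, hsup, Submodule.comap_map_sup_of_comap_le le_sup_left,
    Submodule.map_sup, Submodule.map_span]
  rfl

theorem exists_eq_syndromeLattice {L : Submodule ℤ (E n)} (hbot : syndromeLattice p ⊥ ≤ L)
    (htop : L ≤ syndromeLattice p ⊤) : ∃ W, L = syndromeLattice p W := by
  refine ⟨(L.comap (intVecHom n)).map (Fintype.linearCombination ℤ p), ?_⟩
  rw [syndromeLattice, Submodule.comap_map_eq_self, Submodule.map_comap_eq_self]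
  · exact htop.trans LinearMap.map_le_range
  · exact Submodule.map_le_iff_le_comap.1 hbot

theorem isometricLattices_syndromeLattice_map (σ : Equiv.Perm (Fin n)) (B : M ≃ₗ[ℤ] M)
    (hB : ∀ i, B (p i) = p (σ i)) (W : Submodule ℤ M) :
    IsometricLattices (syndromeLattice p W) (syndromeLattice p (W.map B.toLinearMap)) := by
  set g := LinearIsometryEquiv.piLpCongrLeft 2 ℝ ℝ σ
  have hg (a : Fin n → ℤ) : g (intVec (a ∘ σ)) = intVec a := by
    ext i
    simp [g, intVec]
  have hsyn (a : Fin n → ℤ) :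
      B (Fintype.linearCombination ℤ p (a ∘ σ)) = Fintype.linearCombination ℤ p a := by
    simp [Fintype.linearCombination_apply, hB, Equiv.sum_comp σ fun i => a i • p i]
  refine ⟨g, Set.ext fun x => ⟨?_, ?_⟩⟩
  · rintro ⟨_, ⟨a, ha, rfl⟩, rfl⟩
    obtain ⟨a, rfl⟩ : ∃ b : Fin n → ℤ, b ∘ σ = a := ⟨a ∘ σ.symm, by simp [Function.comp_assoc]⟩
    exact ⟨a, ⟨_, ha, hsyn a⟩, (hg a).symm⟩
  · rintro ⟨a, ⟨c, hc, hca⟩, rfl⟩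
    refine ⟨_, ⟨a ∘ σ, ?_, rfl⟩, hg a⟩
    rw [← hsyn] at hca
    obtain rfl := B.injective hca
    exact hc

end SyndromeLattices

section CheckPoints

open Submodule

/-- The generator matrix of `code7`; its columns are the seven nonzero vectors of `𝔽₂³`. -/
def code7Generator : Matrix (Fin 3) (Fin 7) (ZMod 2) :=
  !![1, 0, 1, 1, 1, 0, 0; 0, 1, 0, 1, 1, 1, 0; 0, 0, 1, 0, 1, 1, 1]

/-- The columns of a parity-check matrix of `code7`: the code is self-orthogonal and even, and its
dual is spanned by the code and the all-one word. -/
def checkPoint (i : Fin 7) : (Fin 3 → ZMod 2) × ZMod 2 := (code7Generator.col i, 1)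

/-- The syndrome of an integer vector with respect to `code7`. -/
abbrev syndrome : (Fin 7 → ℤ) →ₗ[ℤ] (Fin 3 → ZMod 2) × ZMod 2 :=
  Fintype.linearCombination ℤ checkPoint

theorem syndrome_eq (a : Fin 7 → ℤ) :
    syndrome a = (code7Generator.mulVec fun i => (a i : ZMod 2), ((∑ i, a i : ℤ) : ZMod 2)) := by
  ext j
  · simp [Fintype.linearCombination_apply, checkPoint, Matrix.mulVec, dotProduct, Prod.fst_sum,
      mul_comm]
  · simp [Fintype.linearCombination_apply, checkPoint, Prod.snd_sum]

theorem mem_code7_iff {w : Fin 7 → ZMod 2} :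
    w ∈ code7 ↔ code7Generator.mulVec w = 0 ∧ ∑ i, w i = 0 := by
  rw [code7, mem_span_triple]
  constructor
  · rintro ⟨a, b, c, rfl⟩
    decide +revert
  · intro hw
    refine ⟨w 0, w 1, w 2 - w 0, ?_⟩
    revert w
    decide +kernel

theorem intCast_mem_code7_iff {a : Fin 7 → ℤ} :
    (fun i => (a i : ZMod 2)) ∈ code7 ↔ syndrome a = 0 := by
  simp [mem_code7_iff, syndrome_eq, Prod.ext_iff]

/-- The lattice `Λ7 ⊆ L ⊆ ℤ⁷` with the given subspace of syndromes. -/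
def codeLattice (W : Submodule (ZMod 2) ((Fin 3 → ZMod 2) × ZMod 2)) : Submodule ℤ (E 7) :=
  syndromeLattice checkPoint (W.restrictScalars ℤ)

theorem codeLattice_bot : codeLattice ⊥ = Λ7 :=
  (span_setOf_intVec fun _ => intCast_mem_code7_iff).symm

theorem codeLattice_top_prod_bot : codeLattice ((⊤ : Submodule _ _).prod ⊥) = latD7 :=
  (span_setOf_intVec fun a => by
    simp [syndrome_eq, ← ZMod.intCast_eq_zero_iff_even]).symm

theorem mem_latZ7 {x : E 7} : x ∈ latZ7 ↔ ∃ a, intVec a = x := by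
  have hrange : latZ7 = (intVecHom 7).range := by
    simpa [latZ7] using span_setOf_intVec (n := 7) (N := ⊤) (q := fun _ => True) (by simp)
  simp [hrange]

theorem codeLattice_top : codeLattice ⊤ = latZ7 := by
  ext x
  simp [codeLattice, mem_syndromeLattice, mem_latZ7]

theorem codeLattice_sup_span (W : Submodule (ZMod 2) ((Fin 3 → ZMod 2) × ZMod 2))
    (S : Set (Fin 7 → ℤ)) :
    codeLattice (W ⊔ span _ (syndrome '' S)) = codeLattice W ⊔ span ℤ (intVec '' S) := by
  rw [codeLattice, codeLattice, ← syndromeLattice_sup_span, restrictScalars_sup,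
    restrictScalars_span ℤ (ZMod 2) ZMod.intCast_surjective]

theorem exists_eq_codeLattice {L : Submodule ℤ (E 7)} (hΛ : Λ7 ≤ L) (hL : L ≤ latZ7) :
    ∃ W, L = codeLattice W := by
  obtain ⟨W, rfl⟩ := exists_eq_syndromeLattice checkPoint (codeLattice_bot.trans_le hΛ)
    (hL.trans_eq codeLattice_top.symm)
  exact ⟨W.toAddSubgroup.toZModSubmodule 2, rfl⟩

theorem exists_perm_checkPoint_eq (A : (Fin 3 → ZMod 2) ≃ₗ[ZMod 2] (Fin 3 → ZMod 2)) :
    ∃ σ : Equiv.Perm (Fin 7),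
      ∀ i, A.prodCongr (.refl (ZMod 2) (ZMod 2)) (checkPoint i) = checkPoint (σ i) := by
  have hinj : Function.Injective code7Generator.col := by decide
  have hne : ∀ i, code7Generator.col i ≠ 0 := by decide
  have hsurj : ∀ c ≠ 0, ∃ i, code7Generator.col i = c := by decide
  choose σ hσ using fun i => hsurj (A (code7Generator.col i)) (by simpa using hne i)
  have hσinj : Function.Injective σ := fun i j h => hinj (A.injective (by rw [← hσ, ← hσ, h]))
  exact ⟨.ofBijective σ (Finite.injective_iff_bijective.1 hσinj), fun i =>
    Prod.ext (hσ i).symm rfl⟩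

theorem isometricLattices_codeLattice_map (A : (Fin 3 → ZMod 2) ≃ₗ[ZMod 2] (Fin 3 → ZMod 2))
    (W : Submodule (ZMod 2) ((Fin 3 → ZMod 2) × ZMod 2)) :
    IsometricLattices (codeLattice W)
      (codeLattice (W.map (A.prodCongr (.refl _ (ZMod 2))).toLinearMap)) := by
  obtain ⟨σ, hσ⟩ := exists_perm_checkPoint_eq A
  exact isometricLattices_syndromeLattice_map checkPoint σ
    ((A.prodCongr (.refl _ (ZMod 2))).restrictScalars ℤ) hσ (W.restrictScalars ℤ)

theorem exists_isometricLattices_codeLattice_standardSubspace {L : Submodule ℤ (E 7)}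
    (hΛ : Λ7 ≤ L) (hL : L ≤ latZ7) :
    ∃ i, IsometricLattices L (codeLattice (standardSubspace i)) := by
  obtain ⟨W, rfl⟩ := exists_eq_codeLattice hΛ hL
  obtain ⟨A, i, hi⟩ := exists_map_prodCongr_eq_standardSubspace W
  exact ⟨i, hi ▸ isometricLattices_codeLattice_map A W⟩

end CheckPoints

section EvenVectors

theorem inner_intVec {n : ℕ} (a b : Fin n → ℤ) : ⟪intVec a, intVec b⟫ = ((a ⬝ᵥ b : ℤ) : ℝ) := by
  simp [intVec, dotProduct, PiLp.inner_apply, mul_comm]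

theorem intVec_mem_Λ7 {a : Fin 7 → ℤ} : intVec a ∈ Λ7 ↔ syndrome a = 0 := by
  rw [← codeLattice_bot]
  exact intVec_mem_syndromeLattice checkPoint

theorem mem_Λ7 {x : E 7} : x ∈ Λ7 ↔ ∃ a, syndrome a = 0 ∧ intVec a = x := by
  rw [← codeLattice_bot]
  exact mem_syndromeLattice checkPoint

theorem Λ7_le_latZ7 : Λ7 ≤ latZ7 := fun _ hx =>
  let ⟨a, _, ha⟩ := mem_Λ7.1 hx
  mem_latZ7.2 ⟨a, ha⟩

theorem syndrome_snd (a : Fin 7 → ℤ) : (syndrome a).2 = ((a ⬝ᵥ a : ℤ) : ZMod 2) := by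
  have hsq : ∀ t : ZMod 2, t * t = t := by decide
  simp [syndrome_eq, dotProduct, hsq]

theorem code7_eq_span_range_row :
    code7 = Submodule.span (ZMod 2) (Set.range code7Generator.row) := by
  rw [code7]
  congr 1
  ext w
  simp only [Set.mem_insert_iff, Set.mem_singleton_iff, Set.mem_range, Fin.exists_fin_succ,
    eq_comm (a := w), IsEmpty.exists_iff, or_false]
  rfl

theorem forall_mem_code7_dotProduct_eq_zero_iff {z : Fin 7 → ZMod 2} :
    (∀ w ∈ code7, w ⬝ᵥ z = 0) ↔ code7Generator.mulVec z = 0 := by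
  rw [code7_eq_span_range_row]
  refine ⟨fun h => funext fun j => h _ (Submodule.subset_span ⟨j, rfl⟩), fun h w hw => ?_⟩
  induction hw using Submodule.span_induction with
  | mem w hw =>
    obtain ⟨j, rfl⟩ := hw
    exact congr_fun h j
  | zero => exact zero_dotProduct z
  | add w w' _ _ hw hw' => rw [add_dotProduct, hw, hw', add_zero]
  | smul c w _ hw => rw [smul_dotProduct, hw, smul_zero]

theorem forall_mem_Λ7_even_inner_intVec_iff {a : Fin 7 → ℤ} :
    (∀ y ∈ Λ7, ∃ k : ℤ, ⟪intVec a, y⟫ = 2 * k) ↔ (syndrome a).1 = 0 := by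
  have hcast (b : Fin 7 → ℤ) : (∃ k : ℤ, ⟪intVec a, intVec b⟫ = 2 * k) ↔
      (fun i => (b i : ZMod 2)) ⬝ᵥ (fun i => (a i : ZMod 2)) = 0 := by
    have hdot : (fun i => (b i : ZMod 2)) ⬝ᵥ (fun i => (a i : ZMod 2)) =
        ((a ⬝ᵥ b : ℤ) : ZMod 2) := by
      simp [dotProduct, mul_comm]
    rw [hdot, ZMod.intCast_eq_zero_iff_even, even_iff_exists_two_mul, inner_intVec]
    exact exists_congr fun k => by norm_cast
  rw [syndrome_eq, ← forall_mem_code7_dotProduct_eq_zero_iff]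
  constructor
  · intro h w hw
    obtain ⟨b, rfl⟩ := ZMod.intCast_surjective.comp_left w
    exact (hcast b).1 (h _ (intVec_mem_Λ7.2 (intCast_mem_code7_iff.1 hw)))
  · intro h y hy
    obtain ⟨b, hb, rfl⟩ := mem_Λ7.1 hy
    exact (hcast b).2 (h _ (intCast_mem_code7_iff.2 hb))

theorem mem_latZ7_of_forall_mem_Λ7_even_inner {u : E 7}
    (hu : ∀ y ∈ Λ7, ∃ k : ℤ, ⟪u, y⟫ = 2 * k) : u ∈ latZ7 := by
  have hcoord (i : Fin 7) : ∃ k : ℤ, (k : ℝ) = u i := by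
    have hmem : intVec (Pi.single i 2) ∈ Λ7 := intVec_mem_Λ7.2 (by
      rw [Fintype.linearCombination_apply_single]
      decide +revert)
    obtain ⟨k, hk⟩ := hu _ hmem
    refine ⟨k, ?_⟩
    have : ⟪u, intVec (Pi.single i 2)⟫ = 2 * u i := by
      simp [intVec, PiLp.inner_apply, Pi.single_apply, apply_ite]
    linarith
  choose a ha using hcoord
  exact mem_latZ7.2 ⟨a, PiLp.ext ha⟩

theorem exists_inner_eq_two_mul_of_mem_Λ7 {x y : E 7} (hx : x ∈ Λ7) (hy : y ∈ Λ7) :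
    ∃ k : ℤ, ⟪x, y⟫ = 2 * k := by
  obtain ⟨a, ha, rfl⟩ := mem_Λ7.1 hx
  exact forall_mem_Λ7_even_inner_intVec_iff.2 (congr_arg Prod.fst ha) y hy

theorem latticeIsIntegral_Λ7 : LatticeIsIntegral Λ7 := fun x hx y hy =>
  let ⟨k, hk⟩ := exists_inner_eq_two_mul_of_mem_Λ7 hx hy
  ⟨2 * k, by simp [hk]⟩

theorem two_smul_mem_Λ7 {x : E 7} (hx : x ∈ dualLattice Λ7) (hxx : ∃ k : ℤ, ⟪x, x⟫ = (k : ℝ)) :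
    (2 : ℤ) • x ∈ Λ7 := by
  have heven : ∀ y ∈ Λ7, ∃ k : ℤ, ⟪(2 : ℤ) • x, y⟫ = 2 * k := fun y hy => by
    obtain ⟨k, hk⟩ := hx y hy
    exact ⟨k, by simp [two_smul, inner_add_left, hk, two_mul]⟩
  obtain ⟨a, ha⟩ := mem_latZ7.1 (mem_latZ7_of_forall_mem_Λ7_even_inner heven)
  obtain ⟨k, hk⟩ := hxx
  have haa : a ⬝ᵥ a = 4 * k := by
    have : ((a ⬝ᵥ a : ℤ) : ℝ) = 4 * k := by
      rw [← inner_intVec, ha, ← hk]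
      simp only [two_smul, inner_add_left, inner_add_right]
      ring
    exact_mod_cast this
  rw [← ha] at heven ⊢
  refine intVec_mem_Λ7.2 (Prod.ext (forall_mem_Λ7_even_inner_intVec_iff.1 heven) ?_)
  rw [syndrome_snd, haa, Int.cast_mul]
  exact mul_eq_zero_of_left (by decide) _

end EvenVectors

section Roots

/-- Flipping the sign of an odd coordinate of `m` changes the parity of `m ⬝ᵥ b`. -/
theorem exists_odd_dotProduct {n : ℕ} {a m b : Fin n → ℤ} (hab : a = m + (2 : ℤ) • b) {i : Fin n}
    (hi : Odd (m i)) :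
    ∃ m' b', a = m' + (2 : ℤ) • b' ∧ m' ⬝ᵥ m' = m ⬝ᵥ m ∧ Odd (m' ⬝ᵥ b') := by
  rcases Int.even_or_odd (m ⬝ᵥ b) with hmb | hmb
  · refine ⟨m - Pi.single i (2 * m i), b + Pi.single i (m i), ?_, ?_, ?_⟩
    · rw [hab]
      ext j
      rcases eq_or_ne j i with rfl | hj
      · simp
      · simp [hj]
    · simp only [dotProduct_sub, sub_dotProduct, single_dotProduct, dotProduct_single,
        Pi.sub_apply, Pi.single_eq_same]
      ring
    · have : (m - Pi.single i (2 * m i)) ⬝ᵥ (b + Pi.single i (m i)) =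
          m ⬝ᵥ b - 2 * (m i * b i) - m i * m i := by
        simp only [dotProduct_add, sub_dotProduct, single_dotProduct, dotProduct_single,
          Pi.sub_apply, Pi.single_eq_same]
        ring
      rw [this]
      exact (hmb.sub (even_two_mul _)).sub_odd (hi.mul hi)
  · exact ⟨m, b, hab, rfl, hmb⟩

theorem exists_odd_dotProduct_of_syndrome_eq_zero {a : Fin 7 → ℤ} (ha : syndrome a = 0)
    (hne : ∀ b, a ≠ (2 : ℤ) • b) :
    ∃ m b, a = m + (2 : ℤ) • b ∧ m ⬝ᵥ m = 4 ∧ Odd (m ⬝ᵥ b) := by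
  set w : Fin 7 → ZMod 2 := fun i => a i
  have hw : w ∈ code7 := intCast_mem_code7_iff.2 ha
  set m : Fin 7 → ℤ := fun i => (w i).val
  have hdvd (i : Fin 7) : (2 : ℤ) ∣ a i - m i := by
    refine (ZMod.intCast_zmod_eq_zero_iff_dvd (a i - m i) 2).1 ?_
    simp [m, w]
  choose b hb using hdvd
  have hab : a = m + (2 : ℤ) • b := by
    ext i
    simp [← hb]
  obtain ⟨i, hi⟩ : ∃ i, w i ≠ 0 := by
    by_contra! h
    refine hne b (hab.trans ?_)
    ext i
    simp [m, h]
  have hm : m ⬝ᵥ m = 4 := by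
    have hweight : ∀ w : Fin 7 → ZMod 2, code7Generator.mulVec w = 0 ∧ ∑ i, w i = 0 → w ≠ 0 →
        ∑ i, ((w i).val : ℤ) * (w i).val = 4 := by
      decide +kernel
    exact hweight w (mem_code7_iff.1 hw) fun h => hi (congr_fun h i)
  have hodd : Odd (m i) := by
    rw [← Int.not_even_iff_odd, ← ZMod.intCast_eq_zero_iff_even]
    simpa [m] using hi
  obtain ⟨m', b', hab', hm', hodd'⟩ := exists_odd_dotProduct hab hodd
  exact ⟨m', b', hab', hm'.trans hm, hodd'⟩

theorem eq_of_two_zsmul_eq {n : ℕ} {x y : E n} (h : (2 : ℤ) • x = (2 : ℤ) • y) : x = y :=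
  smul_right_injective (E n) (two_ne_zero (α := ℝ)) (by simpa only [two_smul] using h)

theorem exists_root {x : E 7} (hx : (2 : ℤ) • x ∈ Λ7) (hxZ : x ∉ latZ7) :
    ∃ r : E 7, (2 : ℤ) • r ∈ Λ7 ∧ ‖r‖ = 1 ∧ x - r ∈ latZ7 ∧ ∃ k : ℤ, 2 * ⟪r, x⟫ = 2 * k + 1 := by
  obtain ⟨a, ha, hax⟩ := mem_Λ7.1 hx
  have hne (b : Fin 7 → ℤ) : a ≠ (2 : ℤ) • b := by
    rintro rfl
    refine hxZ (mem_latZ7.2 ⟨b, eq_of_two_zsmul_eq ?_⟩)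
    rw [← hax]
    exact ((intVecHom 7).map_smul 2 b).symm
  obtain ⟨m, b, hab, hm, k, hk⟩ := exists_odd_dotProduct_of_syndrome_eq_zero ha hne
  obtain ⟨r, hr⟩ : ∃ r : E 7, (2 : ℤ) • r = intVec m :=
    ⟨(2⁻¹ : ℝ) • intVec m, by simp [two_smul, ← add_smul, ← two_mul]⟩
  have hxr : x = r + intVec b := eq_of_two_zsmul_eq (by
    rw [smul_add, hr, ← hax, hab]
    exact ((intVecHom 7).map_add m ((2 : ℤ) • b)).trans (by rw [map_smul]; rfl))
  have hrr : ⟪r, r⟫ = 1 := by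
    have h := inner_intVec m m
    rw [← hr, hm, two_smul] at h
    simp only [inner_add_left, inner_add_right] at h
    push_cast at h
    linarith
  have hrb : 2 * ⟪r, intVec b⟫ = 2 * k + 1 := by
    have h := inner_intVec m b
    rw [← hr, hk, two_smul, inner_add_left] at h
    push_cast at h
    linarith
  refine ⟨r, hr ▸ intVec_mem_Λ7.2 ?_, ?_, ?_, 1 + k, ?_⟩
  · have two_smul_eq_zero : ∀ c : (Fin 3 → ZMod 2) × ZMod 2, (2 : ℤ) • c = 0 := by decide
    rwa [hab, map_add, map_smul, two_smul_eq_zero, add_zero] at ha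
  · rw [norm_eq_sqrt_real_inner, hrr, Real.sqrt_one]
  · exact mem_latZ7.2 ⟨b, by simp [hxr]⟩
  · rw [hxr, inner_add_right, mul_add, hrr, hrb]
    push_cast
    ring

end Roots

section Isometries

theorem exists_isometry_mem_latZ7 {L : Submodule ℤ (E 7)} (hL : LatticeIsIntegral L) (hΛ : Λ7 ≤ L)
    {x : E 7} (hx : x ∈ L) (hxZ : x ∉ latZ7) :
    ∃ g : E 7 ≃ₗᵢ[ℝ] E 7, (∀ y, g y ∈ Λ7 ↔ y ∈ Λ7) ∧ g x ∈ latZ7 ∧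
      ∀ y ∈ L, y ∈ latZ7 → g y ∈ latZ7 := by
  obtain ⟨r, hrΛ, hr, hxr, k, hk⟩ :=
    exists_root (two_smul_mem_Λ7 (fun y hy => hL x hx y (hΛ hy)) (hL x hx x hx)) hxZ
  set g := (Submodule.span ℝ {r}).reflection
  have hg (y : E 7) (l : ℤ) (hl : 2 * ⟪r, y⟫ = l) : g y = l • r - y := by
    simp [g, Submodule.reflection_singleton_apply, hr, ← Int.cast_smul_eq_zsmul ℝ, ← hl, two_smul,
      two_mul, add_smul]
  have hgΛ (y : E 7) (hy : y ∈ Λ7) : g y ∈ Λ7 := by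
    obtain ⟨l, hl⟩ := exists_inner_eq_two_mul_of_mem_Λ7 hrΛ hy
    rw [hg y (l * 2) (by rw [two_smul, inner_add_left] at hl; push_cast; linarith), mul_smul]
    exact Λ7.sub_mem (Λ7.smul_mem l hrΛ) hy
  refine ⟨g, fun y => ⟨fun hy => ?_, hgΛ y⟩, ?_, fun y hyL hyZ => ?_⟩
  · simpa [g] using hgΛ _ hy
  · have hgx : g x = k • (2 : ℤ) • r - (x - r) := by
      rw [hg x (k * 2 + 1) (by push_cast; linarith), add_smul, mul_smul, one_smul]
      abel
    rw [hgx]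
    exact latZ7.sub_mem (latZ7.smul_mem k (Λ7_le_latZ7 hrΛ)) hxr
  · obtain ⟨l, hl⟩ : ∃ l : ℤ, ⟪r, y⟫ = l := by
      obtain ⟨i, hi⟩ := hL x hx y hyL
      obtain ⟨a, ha⟩ := mem_latZ7.1 hxr
      obtain ⟨b, rfl⟩ := mem_latZ7.1 hyZ
      refine ⟨i - a ⬝ᵥ b, ?_⟩
      rw [Int.cast_sub, ← hi, ← inner_intVec, ha, ← inner_sub_left, sub_sub_cancel]
    rw [hg y (l * 2) (by rw [hl]; push_cast; ring), mul_smul]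
    exact latZ7.sub_mem (latZ7.smul_mem l (Λ7_le_latZ7 hrΛ)) hyZ

/-- The image of a lattice under a linear isometry. -/
def mapLattice {n : ℕ} (g : E n ≃ₗᵢ[ℝ] E n) (L : Submodule ℤ (E n)) : Submodule ℤ (E n) :=
  L.map (g.toLinearEquiv.restrictScalars ℤ).toLinearMap

theorem isometricLattices_mapLattice {n : ℕ} (g : E n ≃ₗᵢ[ℝ] E n) (L : Submodule ℤ (E n)) :
    IsometricLattices L (mapLattice g L) :=
  ⟨g, rfl⟩

theorem isometricLattices_trans {n : ℕ} {L M N : Submodule ℤ (E n)} (hLM : IsometricLattices L M)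
    (hMN : IsometricLattices M N) : IsometricLattices L N := by
  obtain ⟨g, hg⟩ := hLM
  obtain ⟨h, hh⟩ := hMN
  exact ⟨g.trans h, by rw [← hh, ← hg, ← Set.image_comp]; rfl⟩

theorem latticeIsIntegral_mapLattice {n : ℕ} (g : E n ≃ₗᵢ[ℝ] E n) {L : Submodule ℤ (E n)}
    (hL : LatticeIsIntegral L) : LatticeIsIntegral (mapLattice g L) := by
  rintro _ ⟨x, hx, rfl⟩ _ ⟨y, hy, rfl⟩
  simpa using hL x hx y hy

theorem Λ7_le_mapLattice {g : E 7 ≃ₗᵢ[ℝ] E 7} (hg : ∀ y, g y ∈ Λ7 ↔ y ∈ Λ7)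
    {L : Submodule ℤ (E 7)} (hΛ : Λ7 ≤ L) : Λ7 ≤ mapLattice g L := fun y hy =>
  ⟨g.symm y, hΛ ((hg _).1 (by simpa using hy)), by simp⟩

theorem isNoetherian_of_latticeIsIntegral {L : Submodule ℤ (E 7)} (hL : LatticeIsIntegral L)
    (hΛ : Λ7 ≤ L) : IsNoetherian ℤ L := by
  have hmem (x : L) : (2 : ℤ) • (x : E 7) ∈ (intVecHom 7).range :=
    mem_latZ7.1 (Λ7_le_latZ7 (two_smul_mem_Λ7 (fun y hy => hL x x.2 y (hΛ hy)) (hL x x.2 x x.2)))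
  refine isNoetherian_of_injective (LinearMap.codRestrict _ ((2 : ℤ) • L.subtype) hmem)
    fun x y h => ?_
  exact Subtype.ext (eq_of_two_zsmul_eq (congr_arg Subtype.val h))

theorem exists_isometry_map_le_latZ7 {L : Submodule ℤ (E 7)} (hL : LatticeIsIntegral L)
    (hΛ : Λ7 ≤ L) :
    ∃ g : E 7 ≃ₗᵢ[ℝ] E 7, (∀ y, g y ∈ Λ7 ↔ y ∈ Λ7) ∧ mapLattice g L ≤ latZ7 := by
  have := isNoetherian_of_latticeIsIntegral hL hΛ
  let N (g : E 7 ≃ₗᵢ[ℝ] E 7) : Submodule ℤ L :=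
    latZ7.comap ((g.toLinearEquiv.restrictScalars ℤ).toLinearMap ∘ₗ L.subtype)
  obtain ⟨_, ⟨g, hg, rfl⟩, hmax⟩ := set_has_maximal_iff_noetherian.2 this
    (N '' {g | ∀ y, g y ∈ Λ7 ↔ y ∈ Λ7}) ⟨_, .refl ℝ (E 7), fun _ => Iff.rfl, rfl⟩
  refine ⟨g, hg, ?_⟩
  rintro _ ⟨x, hx, rfl⟩
  by_contra hxZ
  obtain ⟨h, hhΛ, hhx, hh⟩ := exists_isometry_mem_latZ7 (latticeIsIntegral_mapLattice g hL)
    (Λ7_le_mapLattice hg hΛ) (Submodule.mem_map_of_mem hx) hxZ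
  refine hmax _ ⟨g.trans h, fun y => (hhΛ _).trans (hg y), rfl⟩
    (SetLike.lt_iff_le_and_exists.2 ⟨fun y hy => ?_, ⟨x, hx⟩, hhx, hxZ⟩)
  exact hh _ (Submodule.mem_map_of_mem y.2) hy

end Isometries

section DeepHole

theorem exists_syndrome_eq_of_ne {s : (Fin 3 → ZMod 2) × ZMod 2} (hs : s ≠ (0, 1)) :
    ∃ a, syndrome a = s ∧ a ⬝ᵥ a ≤ 2 := by
  have hcases : ∀ s ≠ ((0, 1) : (Fin 3 → ZMod 2) × ZMod 2), s = 0 ∨ (∃ i, checkPoint i = s) ∨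
      ∃ i j, i ≠ j ∧ checkPoint i + checkPoint j = s := by
    decide
  rcases hcases s hs with rfl | ⟨i, rfl⟩ | ⟨i, j, hij, rfl⟩
  · exact ⟨0, map_zero _, by simp⟩
  · exact ⟨Pi.single i 1, by simp [Fintype.linearCombination_apply_single], by simp⟩
  · refine ⟨Pi.single i 1 + Pi.single j 1, ?_, ?_⟩
    · simp [Fintype.linearCombination_apply_single]
    · simp [hij, hij.symm]

theorem syndrome_eq_of_forall_three_le_norm_sq {a : Fin 7 → ℤ}
    (ha : ∀ y ∈ Λ7, 3 ≤ ‖intVec a + y‖ ^ 2) : syndrome a = (0, 1) := by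
  by_contra hne
  obtain ⟨b, hb, hbb⟩ := exists_syndrome_eq_of_ne hne
  have hmem : intVec (b - a) ∈ Λ7 := intVec_mem_Λ7.2 (by rw [map_sub, hb, sub_self])
  have hsum : intVec a + intVec (b - a) = intVec b := by
    rw [← intVecHom_apply, ← intVecHom_apply, ← map_add, add_sub_cancel, intVecHom_apply]
  have h := ha _ hmem
  rw [hsum, ← real_inner_self_eq_norm_sq, inner_intVec] at h
  have hbb' : 3 ≤ b ⬝ᵥ b := by exact_mod_cast h
  lia

theorem latticeIsIntegral_sup_span_singleton {n : ℕ} {L : Submodule ℤ (E n)}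
    (hL : LatticeIsIntegral L) {v : E n} (hv : v ∈ dualLattice L)
    (hvv : ∃ k : ℤ, ⟪v, v⟫ = (k : ℝ)) :
    LatticeIsIntegral (L ⊔ Submodule.span ℤ {v}) := by
  simp only [LatticeIsIntegral, Submodule.mem_sup, Submodule.mem_span_singleton]
  rintro _ ⟨x, hx, _, ⟨m, rfl⟩, rfl⟩ _ ⟨y, hy, _, ⟨n, rfl⟩, rfl⟩
  obtain ⟨c, hxy⟩ := hL x hx y hy
  obtain ⟨d, hvx⟩ := hv x hx
  obtain ⟨e, hvy⟩ := hv y hy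
  obtain ⟨f, hvv⟩ := hvv
  refine ⟨c + n * d + m * (e + n * f), ?_⟩
  simp only [← Int.cast_smul_eq_zsmul ℝ, inner_add_left, inner_add_right, real_inner_smul_left,
    real_inner_smul_right, hxy, hvy, hvv, real_inner_comm v x, hvx]
  push_cast
  ring

theorem exists_intVec_eq_and_syndrome_eq {v : E 7} (hv : v ∈ dualLattice Λ7)
    (hvnorm : ‖v‖ ^ 2 = 3) (hvmin : ∀ y ∈ Λ7, 3 ≤ ‖v + y‖ ^ 2) :
    ∃ a, syndrome a = (0, 1) ∧ intVec a = v := by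
  have hvv : ⟪v, v⟫ = 3 := by rw [real_inner_self_eq_norm_sq, hvnorm]
  obtain ⟨g, hg, hgL⟩ := exists_isometry_map_le_latZ7
    (latticeIsIntegral_sup_span_singleton latticeIsIntegral_Λ7 hv ⟨3, by rw [hvv]; norm_num⟩)
    le_sup_left
  obtain ⟨b, hb⟩ : ∃ b, intVec b = g v := mem_latZ7.1 <| hgL <|
    Submodule.mem_map_of_mem (le_sup_right (a := Λ7) (Submodule.mem_span_singleton_self v))
  have hsyn : syndrome b = (0, 1) := syndrome_eq_of_forall_three_le_norm_sq fun y hy => by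
    have hy' : g.symm y ∈ Λ7 := (hg _).1 (by simpa using hy)
    rw [hb, ← g.apply_symm_apply y, ← map_add, g.norm_map]
    exact hvmin _ hy'
  have heven : ∀ y ∈ Λ7, ∃ k : ℤ, ⟪v, y⟫ = 2 * k := fun y hy => by
    rw [← g.inner_map_map, ← hb]
    exact forall_mem_Λ7_even_inner_intVec_iff.2 (congr_arg Prod.fst hsyn) _ ((hg y).2 hy)
  obtain ⟨a, rfl⟩ := mem_latZ7.1 (mem_latZ7_of_forall_mem_Λ7_even_inner heven)
  have haa : a ⬝ᵥ a = 3 := by exact_mod_cast (inner_intVec a a).symm.trans hvv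
  refine ⟨a, Prod.ext (forall_mem_Λ7_even_inner_intVec_iff.1 heven) ?_, rfl⟩
  rw [syndrome_snd, haa]
  decide

end DeepHole

section Classification

theorem codeLattice_span_eq_sup_span (S : Set (Fin 7 → ℤ))
    {T : Set ((Fin 3 → ZMod 2) × ZMod 2)} {U : Set (E 7)} (hT : syndrome '' S = T)
    (hU : intVec '' S = U) :
    codeLattice (Submodule.span _ T) = Λ7 ⊔ Submodule.span ℤ U := by
  rw [← hT, ← hU, ← codeLattice_bot, ← codeLattice_sup_span, bot_sup_eq]

/-- The eleven lattices of the classification. -/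
def standardLattice (v : E 7) : Fin 11 → Submodule ℤ (E 7) :=
  ![Λ7,
    Λ7 ⊔ Submodule.span ℤ {v},
    Λ7 ⊔ Submodule.span ℤ {εv 0},
    Λ7 ⊔ Submodule.span ℤ {εv 1 + εv 3},
    (Λ7 ⊔ Submodule.span ℤ {v}) ⊔ Submodule.span ℤ {εv 0},
    Λ7 ⊔ Submodule.span ℤ {εv 0, εv 1},
    Λ7 ⊔ Submodule.span ℤ {εv 0 + εv 2, εv 1 + εv 3},
    Λ7 ⊔ Submodule.span ℤ {εv 0, εv 1, εv 3},
    Λ7 ⊔ Submodule.span ℤ {εv 0, εv 1, εv 0 + εv 2},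
    latD7,
    latZ7]

theorem εv_eq_intVec {n : ℕ} (i : Fin n) : εv i = intVec (Pi.single i 1) := by
  ext j
  simp [εv, intVec, Pi.single_apply]

theorem codeLattice_standardSubspace {v : Fin 7 → ℤ} (hv : syndrome v = (0, 1)) (i : Fin 11) :
    codeLattice (standardSubspace i) = standardLattice (intVec v) i := by
  have hadd (i j : Fin 7) : intVec (Pi.single i 1 + Pi.single j 1) = (εv i + εv j : E 7) := by
    rw [εv_eq_intVec, εv_eq_intVec, ← intVecHom_apply, map_add, intVecHom_apply, intVecHom_apply]
  have hp0 : checkPoint 0 = (![1, 0, 0], 1) := by decide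
  have hp1 : checkPoint 1 = (![0, 1, 0], 1) := by decide
  have hp3 : checkPoint 3 = (![1, 1, 0], 1) := by decide
  have hp13 : checkPoint 1 + checkPoint 3 = (![1, 0, 0], 0) := by decide
  have hp02 : checkPoint 0 + checkPoint 2 = (![0, 0, 1], 0) := by decide
  fin_cases i
  · exact codeLattice_bot
  · exact codeLattice_span_eq_sup_span {v} (by simp [hv]) (by simp)
  · exact codeLattice_span_eq_sup_span {Pi.single 0 1} (by simp [hp0]) (by simp [εv_eq_intVec])
  · exact codeLattice_span_eq_sup_span {Pi.single 1 1 + Pi.single 3 1} (by simp [hp13])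
      (by simp [hadd])
  · have hO : codeLattice (Submodule.span _ {(0, 1), (![1, 0, 0], 1)}) =
        Λ7 ⊔ Submodule.span ℤ {intVec v, εv 0} :=
      codeLattice_span_eq_sup_span {v, Pi.single 0 1} (by simp [Set.image_insert_eq, hv, hp0])
        (by simp [Set.image_insert_eq, εv_eq_intVec])
    rwa [Submodule.span_insert (intVec v), ← sup_assoc] at hO
  · exact codeLattice_span_eq_sup_span {Pi.single 0 1, Pi.single 1 1}
      (by simp [Set.image_insert_eq, hp0, hp1])
      (by simp [Set.image_insert_eq, εv_eq_intVec])
  · exact codeLattice_span_eq_sup_span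
      {Pi.single 0 1 + Pi.single 2 1, Pi.single 1 1 + Pi.single 3 1}
      (by simp [Set.image_insert_eq, hp02, hp13])
      (by simp [Set.image_insert_eq, hadd])
  · exact codeLattice_span_eq_sup_span {Pi.single 0 1, Pi.single 1 1, Pi.single 3 1}
      (by simp [Set.image_insert_eq, hp0, hp1, hp3])
      (by simp [Set.image_insert_eq, εv_eq_intVec])
  · exact codeLattice_span_eq_sup_span
      {Pi.single 0 1, Pi.single 1 1, Pi.single 0 1 + Pi.single 2 1}
      (by simp [Set.image_insert_eq, hp0, hp1, ← hp02])
      (by simp [Set.image_insert_eq, hadd, εv_eq_intVec])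
  · exact codeLattice_top_prod_bot
  · exact codeLattice_top

end Classification

/-- If `v ∈ Λ₇♯` has `‖v‖² = 3` and its coset has minimal norm 3, and `O₇ = ⟨Λ₇, v⟩`,
then every integral lattice in `ℝ⁷` containing `Λ₇` is isometric to one of eleven
lattices. -/
theorem integral_lattices_containing_Λ7 (v : E 7)
    (hv : v ∈ dualLattice Λ7) (hvnorm : ‖v‖ ^ 2 = 3)
    (hvmin : ∀ y ∈ Λ7, 3 ≤ ‖v + y‖ ^ 2)
    (L : Submodule ℤ (E 7)) (hL : LatticeIsIntegral L) (hΛ : Λ7 ≤ L) :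
    IsometricLattices L Λ7 ∨
    IsometricLattices L (Λ7 ⊔ Submodule.span ℤ {v}) ∨
    IsometricLattices L (Λ7 ⊔ Submodule.span ℤ {εv 0}) ∨
    IsometricLattices L (Λ7 ⊔ Submodule.span ℤ {εv 1 + εv 3}) ∨
    IsometricLattices L ((Λ7 ⊔ Submodule.span ℤ {v}) ⊔ Submodule.span ℤ {εv 0}) ∨
    IsometricLattices L (Λ7 ⊔ Submodule.span ℤ {εv 0, εv 1}) ∨
    IsometricLattices L (Λ7 ⊔ Submodule.span ℤ {εv 0 + εv 2, εv 1 + εv 3}) ∨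
    IsometricLattices L (Λ7 ⊔ Submodule.span ℤ {εv 0, εv 1, εv 3}) ∨
    IsometricLattices L (Λ7 ⊔ Submodule.span ℤ {εv 0, εv 1, εv 0 + εv 2}) ∨
    IsometricLattices L latD7 ∨
    IsometricLattices L latZ7 := by
  obtain ⟨a, ha, rfl⟩ := exists_intVec_eq_and_syndrome_eq hv hvnorm hvmin
  obtain ⟨g, hg, hgL⟩ := exists_isometry_map_le_latZ7 hL hΛ
  obtain ⟨i, hi⟩ := exists_isometricLattices_codeLattice_standardSubspace
    (Λ7_le_mapLattice hg hΛ) hgL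
  rw [codeLattice_standardSubspace ha] at hi
  have hexists : ∃ i, IsometricLattices L (standardLattice (intVec a) i) :=
    ⟨i, isometricLattices_trans (isometricLattices_mapLattice g L) hi⟩
  simpa [standardLattice, Fin.exists_fin_succ] using hexists
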